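/- Let H ≤ G be groups of type VFP with χ(H) ≠ 0, and suppose G = A *_C B is a reduced amalgam (i.e., [A:C] ≥ 2 and [B:C] ≥ 2) where A, B, C each contain H as a subgroup of finite index. Then χ(G)/χ(H) ≤ 0, and χ(G) = 0 if and only if [A:C] = [B:C] = 2. In fact χ(G) = (χ(H)/[C:H])·(1/[A:C] + 1/[B:C] − 1). -/

import Mathlib

open CategoryTheory

noncomputable def trivialZMod (G : Type) [Group G] : ModuleCat (MonoidAlgebra ℤ G) :=
  (Rep.equivalenceModuleMonoidAlgebra.functor.obj (Rep.trivial ℤ G ℤ))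

def TypeFP (G : Type) [Group G] : Prop :=
  ∃ (P : ProjectiveResolution (trivialZMod G)) (n : ℕ),
    (∀ i, Module.Finite (MonoidAlgebra ℤ G) (P.complex.X i)) ∧
    ∀ i, n < i → Subsingleton (P.complex.X i)

def TypeVFP (G : Type) [Group G] : Prop :=
  ∃ K : Subgroup G, K.index ≠ 0 ∧ TypeFP K

/-- `HasFreeResOfRanks G n r`: the trivial `ℤG`-module `ℤ` admits a free resolution of
length `≤ n` in which the `i`-th module is free of finite rank `r i`. -/
def HasFreeResOfRanks (G : Type) [Group G] (n : ℕ) (r : ℕ → ℕ) : Prop :=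
  ∃ P : ProjectiveResolution (trivialZMod G),
    (∀ i, Nonempty ((P.complex.X i) ≃ₗ[MonoidAlgebra ℤ G]
      (Fin (r i) →₀ MonoidAlgebra ℤ G))) ∧
    ∀ i, n < i → r i = 0

/-- `EulerCharRel G q` asserts that the Euler characteristic of the type-`VFP` group `G`
(in the sense of Brown) equals the rational number `q`: some finite-index subgroup `K`
has a finite free resolution of the trivial module, and `q` is the alternating sum of
the ranks divided by the index `[G : K]`. -/
def EulerCharRel (G : Type) [Group G] (q : ℚ) : Prop :=
  ∃ (K : Subgroup G) (n : ℕ) (r : ℕ → ℕ), K.index ≠ 0 ∧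
    HasFreeResOfRanks K n r ∧
    q = (∑ i ∈ Finset.range (n + 1), (-1 : ℚ) ^ i * r i) / K.index


/-- `G`, together with `iA`, `iB`, is the amalgamated free product `A *_C B` along the
injections `f : C → A` and `g : C → B` (i.e. the pushout of groups). -/
def IsAmalgamatedProduct {C A B G : Type} [Group C] [Group A] [Group B] [Group G]
    (f : C →* A) (g : C →* B) (iA : A →* G) (iB : B →* G) : Prop :=
  iA.comp f = iB.comp g ∧
  ∀ (K : Type) (_ : Group K) (kA : A →* K) (kB : B →* K),
    kA.comp f = kB.comp g → ∃! k : G →* K, k.comp iA = kA ∧ k.comp iB = kB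

/-! ### Ranks of finitely generated projective modules with respect to a trace -/

/-- `M` is a finitely generated projective module and `q` is the trace of its identity with
respect to `τ`, computed from a finite dual basis of `M`. -/
def HasRank {R : Type} [Ring R] (τ : R →+ ℚ) (M : Type) [AddCommGroup M] [Module R M]
    (q : ℚ) : Prop :=
  ∃ (ι : Type) (_ : Fintype ι) (x : ι → M) (f : ι → M →ₗ[R] R),
    (∀ m, ∑ i, f i m • x i = m) ∧ q = ∑ i, τ (f i (x i))

section Rank

variable {R : Type} [Ring R] {τ : R →+ ℚ}
variable {K M N : Type} [AddCommGroup K] [Module R K] [AddCommGroup M] [Module R M]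
  [AddCommGroup N] [Module R N]

theorem HasRank.unique (hτ : ∀ a b, τ (a * b) = τ (b * a)) {p q : ℚ}
    (hp : HasRank τ M p) (hq : HasRank τ M q) : p = q := by
  obtain ⟨ι, _, x, f, hf, rfl⟩ := hp
  obtain ⟨κ, _, y, g, hg, rfl⟩ := hq
  have h1 : ∀ i, τ (f i (x i)) = ∑ j, τ (g j (x i) * f i (y j)) := fun i => by
    conv_lhs => rw [← hg (x i)]
    simp [map_sum]
  have h2 : ∀ j, τ (g j (y j)) = ∑ i, τ (f i (y j) * g j (x i)) := fun j => by
    conv_lhs => rw [← hf (y j)]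
    simp [map_sum]
  simp_rw [h1, h2, hτ (g _ _)]
  exact Finset.sum_comm

theorem HasRank.congr {q : ℚ} (h : HasRank τ M q) (e : M ≃ₗ[R] N) : HasRank τ N q := by
  obtain ⟨ι, _, x, f, hf, rfl⟩ := h
  refine ⟨ι, inferInstance, fun i => e (x i), fun i => f i ∘ₗ e.symm.toLinearMap,
    fun m => ?_, by simp⟩
  apply e.symm.injective
  simpa using hf (e.symm m)

theorem HasRank.zero [Subsingleton M] : HasRank τ M 0 :=
  ⟨Empty, inferInstance, Empty.elim, fun i => i.elim, fun _ => Subsingleton.elim _ _, by simp⟩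

theorem HasRank.pi (ι : Type) [Fintype ι] : HasRank τ (ι → R) (Fintype.card ι * τ 1) := by
  classical
  refine ⟨ι, inferInstance, fun i => Pi.single i 1, fun i => LinearMap.proj i, fun m => ?_, ?_⟩
  · ext j
    simp [Finset.sum_apply, Pi.single_apply]
  · simp

theorem HasRank.exists_lift {q : ℚ} (h : HasRank τ M q) (p : K →ₗ[R] N)
    (hp : Function.Surjective p) (g : M →ₗ[R] N) : ∃ s : M →ₗ[R] K, p ∘ₗ s = g := by
  obtain ⟨ι, _, x, f, hf, -⟩ := h
  choose y hy using fun i => hp (g (x i))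
  refine ⟨∑ i, (f i).smulRight (y i), ?_⟩
  ext m
  conv_rhs => rw [← hf m]
  simp [hy]

theorem exists_retraction (i : K →ₗ[R] M) (p : M →ₗ[R] N) (hi : Function.Injective i)
    (he : Function.Exact i p) (s : N →ₗ[R] M) (hs : p ∘ₗ s = LinearMap.id) :
    ∃ r : M →ₗ[R] K, ∀ m, i (r m) = m - s (p m) := by
  have hm : ∀ m, (LinearMap.id - s ∘ₗ p : M →ₗ[R] M) m ∈ LinearMap.range i := fun m => by
    refine (he _).1 ?_
    have : p (s (p m)) = p m := LinearMap.congr_fun hs (p m)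
    simp [this]
  refine ⟨(LinearEquiv.ofInjective i hi).symm.toLinearMap ∘ₗ
    LinearMap.codRestrict _ (LinearMap.id - s ∘ₗ p) hm, fun m => ?_⟩
  have := LinearEquiv.apply_symm_apply (LinearEquiv.ofInjective i hi)
    (LinearMap.codRestrict _ (LinearMap.id - s ∘ₗ p) hm m)
  exact congrArg Subtype.val this

theorem HasRank.of_exact {k n : ℚ} (hk : HasRank τ K k) (hn : HasRank τ N n)
    (i : K →ₗ[R] M) (p : M →ₗ[R] N) (hi : Function.Injective i)
    (hp : Function.Surjective p) (he : Function.Exact i p) : HasRank τ M (k + n) := by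
  obtain ⟨s, hs⟩ := hn.exists_lift p hp LinearMap.id
  obtain ⟨r, hr⟩ := exists_retraction i p hi he s hs
  have hs' : ∀ y, p (s y) = y := LinearMap.congr_fun hs
  have hri : ∀ x, r (i x) = x := fun x => hi (by rw [hr, he.apply_apply_eq_zero]; simp)
  obtain ⟨ι, _, x, f, hf, rfl⟩ := hk
  obtain ⟨κ, _, y, g, hg, rfl⟩ := hn
  refine ⟨ι ⊕ κ, inferInstance, Sum.elim (fun a => i (x a)) (fun b => s (y b)),
    Sum.elim (fun a => f a ∘ₗ r) (fun b => g b ∘ₗ p), fun m => ?_, ?_⟩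
  · have h1 := congrArg i (hf (r m))
    have h2 := congrArg s (hg (p m))
    simp only [map_sum, map_smul] at h1 h2
    simp [h1, h2, hr]
  · simp [hri, hs']

theorem HasRank.of_retract {m : ℚ} (hm : HasRank τ M m) (i : K →ₗ[R] M) (r : M →ₗ[R] K)
    (h : ∀ x, r (i x) = x) : ∃ k, HasRank τ K k := by
  obtain ⟨ι, _, x, f, hf, rfl⟩ := hm
  refine ⟨_, ι, inferInstance, fun a => r (x a), fun a => f a ∘ₗ i, fun m => ?_, rfl⟩
  have := congrArg r (hf (i m))
  simpa [h] using this

theorem HasRank.of_exact_left (hτ : ∀ a b, τ (a * b) = τ (b * a)) {m n : ℚ}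
    (hm : HasRank τ M m) (hn : HasRank τ N n)
    (i : K →ₗ[R] M) (p : M →ₗ[R] N) (hi : Function.Injective i)
    (hp : Function.Surjective p) (he : Function.Exact i p) : HasRank τ K (m - n) := by
  obtain ⟨s, hs⟩ := hn.exists_lift p hp LinearMap.id
  obtain ⟨r, hr⟩ := exists_retraction i p hi he s hs
  obtain ⟨k, hk⟩ := hm.of_retract i r
    fun x => hi (by rw [hr, he.apply_apply_eq_zero]; simp)
  rwa [(hm.unique hτ (hk.of_exact hn i p hi hp he)), add_sub_cancel_right]

theorem HasRank.exists_cover {q : ℚ} (h : HasRank τ M q) :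
    ∃ (k : ℕ) (p : (Fin k → R) →ₗ[R] M), Function.Surjective p := by
  obtain ⟨ι, _, x, f, hf, -⟩ := h
  let e := Fintype.equivFin ι
  refine ⟨Fintype.card ι, Fintype.linearCombination R (fun j => x (e.symm j)), fun m =>
    ⟨fun j => f (e.symm j) m, ?_⟩⟩
  rw [Fintype.linearCombination_apply, e.symm.sum_comp (fun i => f i m • x i), hf]

end Rank

/-! ### Euler characteristics of modules of type `FP` -/

/-- `M` has a resolution of length at most `n` by finitely generated projective modules, free
except possibly for the last one, and `q` is the alternating sum of their ranks. -/
def HasChi {R : Type} [Ring R] (τ : R →+ ℚ) :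
    ℕ → (M : Type) → [AddCommGroup M] → [Module R M] → ℚ → Prop
  | 0, M, _, _, q => HasRank τ M q
  | n + 1, M, _, _, q => ∃ (k : ℕ) (p : (Fin k → R) →ₗ[R] M), Function.Surjective p ∧
      HasChi τ n (LinearMap.ker p) (k * τ 1 - q)

section Chi

variable {R : Type} [Ring R] {τ : R →+ ℚ}
variable {K M N : Type} [AddCommGroup K] [Module R K] [AddCommGroup M] [Module R M]
  [AddCommGroup N] [Module R N]

theorem HasRank.free (k : ℕ) : HasRank τ (Fin k → R) (k * τ 1) := by
  simpa using HasRank.pi (τ := τ) (Fin k)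

theorem HasChi.congr {n : ℕ} {q : ℚ} (h : HasChi τ n M q) (e : M ≃ₗ[R] N) :
    HasChi τ n N q := by
  cases n with
  | zero => exact HasRank.congr h e
  | succ n =>
    obtain ⟨k, p, hp, h⟩ := h
    refine ⟨k, e.toLinearMap ∘ₗ p, e.surjective.comp hp, ?_⟩
    rwa [LinearEquiv.ker_comp]

/-- The kernel of a surjection is isomorphic to any other module completing it to a short exact
sequence. -/
theorem HasChi.of_ker {n : ℕ} {q : ℚ} {p : M →ₗ[R] N} (h : HasChi τ n (LinearMap.ker p) q)
    (i : K →ₗ[R] M) (hi : Function.Injective i) (he : Function.Exact i p) : HasChi τ n K q :=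
  h.congr ((LinearEquiv.ofEq _ _ (LinearMap.exact_iff.1 he)).trans
    (LinearEquiv.ofInjective i hi).symm)

theorem exact_subtype_ker (p : M →ₗ[R] N) : Function.Exact (LinearMap.ker p).subtype p :=
  LinearMap.exact_subtype_ker_map p

theorem HasChi.succ (hτ : ∀ a b, τ (a * b) = τ (b * a)) {n : ℕ} {q : ℚ} (h : HasChi τ n M q) :
    HasChi τ (n + 1) M q := by
  induction n generalizing M q with
  | zero =>
    obtain ⟨k, p, hp⟩ := HasRank.exists_cover h
    exact ⟨k, p, hp, (HasRank.free k).of_exact_left hτ h _ p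
      (Submodule.injective_subtype _) hp (exact_subtype_ker p)⟩
  | succ n ih =>
    obtain ⟨k, p, hp, h⟩ := h
    exact ⟨k, p, hp, ih h⟩

theorem HasChi.mono (hτ : ∀ a b, τ (a * b) = τ (b * a)) {m n : ℕ} (hmn : m ≤ n) {q : ℚ}
    (h : HasChi τ m M q) : HasChi τ n M q :=
  Nat.le_induction h (fun _ _ h => h.succ hτ) n hmn

theorem HasChi.of_extension {n : ℕ} {a b : ℚ}
    (hk : HasChi τ n K a) (hn : HasChi τ n N b)
    (i : K →ₗ[R] M) (p : M →ₗ[R] N) (hi : Function.Injective i)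
    (hp : Function.Surjective p) (he : Function.Exact i p) : HasChi τ n M (a + b) := by
  induction n generalizing K M N a b with
  | zero => exact HasRank.of_exact hk hn i p hi hp he
  | succ n ih =>
    obtain ⟨k, u, hu, hk⟩ := hk
    obtain ⟨l, v, hv, hn⟩ := hn
    obtain ⟨w, hw⟩ := (HasRank.free (τ := τ) l).exists_lift p hp v
    have hw' : ∀ y, p (w y) = v y := LinearMap.congr_fun hw
    have hpi : ∀ y, p (i y) = 0 := he.apply_apply_eq_zero
    let e : (Fin (k + l) → R) ≃ₗ[R] (Fin k → R) × (Fin l → R) :=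
      (LinearEquiv.funCongrLeft R R finSumFinEquiv).trans
        (LinearEquiv.sumArrowLequivProdArrow _ _ R R)
    let π : (Fin k → R) × (Fin l → R) →ₗ[R] M := (i ∘ₗ u).coprod w
    have hπ : ∀ y, π y = i (u y.1) + w y.2 := fun y => rfl
    have hπs : Function.Surjective π := fun m => by
      obtain ⟨y, hy⟩ := hv (p m)
      obtain ⟨z, hz⟩ := (he (m - w y)).1 (by simp [hw', hy])
      obtain ⟨x, hx⟩ := hu z
      exact ⟨(x, y), by simp [hπ, hx, hz]⟩
    have key : HasChi τ n (LinearMap.ker π) ((k * τ 1 - a) + (l * τ 1 - b)) := by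
      refine ih hk hn
        ((LinearMap.inl R _ _ ∘ₗ (LinearMap.ker u).subtype).codRestrict _ fun x => ?_)
        ((LinearMap.snd R _ _ ∘ₗ (LinearMap.ker π).subtype).codRestrict _ fun x => ?_) ?_ ?_ ?_
      · change i (u x) + w 0 = 0
        rw [LinearMap.mem_ker.1 x.2, map_zero, map_zero, add_zero]
      · have : p (i (u x.1.1) + w x.1.2) = p 0 := congrArg p (LinearMap.mem_ker.1 x.2)
        rw [map_add, hpi, hw', zero_add, map_zero] at this
        exact this
      · intro x y hxy
        exact Subtype.ext (congrArg (fun t => t.1.1) hxy)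
      · rintro ⟨y, hy⟩
        obtain ⟨z, hz⟩ := (he (w y)).1 (by rw [hw', LinearMap.mem_ker.1 hy])
        obtain ⟨x, hx⟩ := hu (-z)
        refine ⟨⟨(x, y), ?_⟩, rfl⟩
        change i (u x) + w y = 0
        rw [hx, map_neg, hz, neg_add_cancel]
      · rintro ⟨⟨x, y⟩, hxy⟩
        constructor
        · intro h
          obtain rfl : y = 0 := congrArg Subtype.val h
          exact ⟨⟨x, hi (by simpa [hπ] using hxy)⟩, rfl⟩
        · rintro ⟨z, hz⟩
          exact Subtype.ext (congrArg (fun t => t.1.2) hz).symm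
    refine ⟨k + l, π ∘ₗ e.toLinearMap, hπs.comp e.surjective, ?_⟩
    have e' : LinearMap.ker π ≃ₗ[R] LinearMap.ker (π ∘ₗ e.toLinearMap) :=
      (LinearEquiv.ofSubmodule' e (LinearMap.ker π)).symm
    convert key.congr e' using 1
    push_cast
    ring

/-- Kernel of a surjection onto a projective module. -/
theorem HasChi.of_projective_quotient (hτ : ∀ a b, τ (a * b) = τ (b * a)) {n : ℕ} {a b : ℚ}
    (hm : HasChi τ n M a) (hn : HasRank τ N b) (i : K →ₗ[R] M) (p : M →ₗ[R] N)
    (hi : Function.Injective i) (hp : Function.Surjective p) (he : Function.Exact i p) :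
    HasChi τ n K (a - b) := by
  cases n with
  | zero => exact HasRank.of_exact_left hτ hm hn i p hi hp he
  | succ n =>
    obtain ⟨s, hs⟩ := hn.exists_lift p hp LinearMap.id
    obtain ⟨r, hr⟩ := exists_retraction i p hi he s hs
    have hs' : ∀ y, p (s y) = y := LinearMap.congr_fun hs
    have hri : ∀ x, r (i x) = x := fun x => hi (by rw [hr, he.apply_apply_eq_zero]; simp)
    have hrs : ∀ x, r (s x) = 0 := fun x => hi (by simp [hr, hs'])
    have hrp : ∀ x, r x = 0 → p x = 0 → x = 0 := fun x h1 h2 => by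
      have := hr x
      simpa [h1, h2] using this.symm
    obtain ⟨k, π, hπ, h⟩ := hm
    refine ⟨k, r ∘ₗ π, Function.Surjective.comp (g := r) (fun x => ⟨i x, hri x⟩) hπ, ?_⟩
    have key : HasChi τ n (LinearMap.ker (r ∘ₗ π)) ((k * τ 1 - a) + b) := by
      refine h.of_extension (HasChi.mono hτ (Nat.zero_le n) hn)
        (Submodule.inclusion fun x hx => ?_)
        (p ∘ₗ π ∘ₗ (LinearMap.ker (r ∘ₗ π)).subtype) (Submodule.inclusion_injective _) ?_ ?_
      · simp [LinearMap.mem_ker.1 hx]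
      · intro y
        obtain ⟨x, hx⟩ := hπ (s y)
        exact ⟨⟨x, by simp [hx, hrs]⟩, by simp [hx, hs']⟩
      · rintro ⟨x, hx⟩
        constructor
        · intro h
          exact ⟨⟨x, hrp _ hx h⟩, rfl⟩
        · rintro ⟨⟨z, hz⟩, hzx⟩
          obtain rfl : z = x := congrArg Subtype.val hzx
          exact (congrArg p (LinearMap.mem_ker.1 hz)).trans (map_zero p)
    convert key using 1
    ring

/-- Schanuel's lemma: the kernel of any surjection from a finitely generated projective module. -/
theorem HasChi.ker_of_projective (hτ : ∀ a b, τ (a * b) = τ (b * a)) {n : ℕ} {a b : ℚ}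
    (hn : HasChi τ (n + 1) N b) (hm : HasRank τ M a) (p : M →ₗ[R] N)
    (hp : Function.Surjective p) : HasChi τ n (LinearMap.ker p) (a - b) := by
  obtain ⟨k, π, hπ, h⟩ := hn
  let E := LinearMap.ker (p.coprod (-π))
  have hE : ∀ x y, (x, y) ∈ E ↔ p x = π y := fun x y => by
    rw [LinearMap.mem_ker, LinearMap.coprod_apply, LinearMap.neg_apply, add_neg_eq_zero]
  have h1 : HasChi τ n E ((k * τ 1 - b) + a) := by
    refine h.of_extension (HasChi.mono hτ (Nat.zero_le n) hm)
      ((LinearMap.inr R _ _ ∘ₗ (LinearMap.ker π).subtype).codRestrict _ fun x => ?_)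
      (LinearMap.fst R _ _ ∘ₗ E.subtype) ?_ ?_ ?_
    · exact (hE _ _).2 ((map_zero p).trans (LinearMap.mem_ker.1 x.2).symm)
    · intro x y hxy
      exact Subtype.ext (congrArg (fun t => t.1.2) hxy)
    · intro y
      obtain ⟨x, hx⟩ := hπ (p y)
      exact ⟨⟨(y, x), (hE _ _).2 hx.symm⟩, rfl⟩
    · rintro ⟨⟨x, y⟩, hxy⟩
      constructor
      · intro h
        obtain rfl : x = 0 := h
        exact ⟨⟨y, ((hE _ _).1 hxy).symm.trans (map_zero p)⟩, rfl⟩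
      · rintro ⟨z, hz⟩
        exact (congrArg (fun t => t.1.1) hz).symm
  have h2 := h1.of_projective_quotient hτ (HasRank.free k)
    ((LinearMap.inl R _ _ ∘ₗ (LinearMap.ker p).subtype).codRestrict E fun x =>
      (hE _ _).2 ((LinearMap.mem_ker.1 x.2).trans (map_zero π).symm))
    (LinearMap.snd R _ _ ∘ₗ E.subtype)
    (fun x y hxy => Subtype.ext (congrArg (fun t => t.1.1) hxy))
    (fun y => by
      obtain ⟨x, hx⟩ := hp (π y)
      exact ⟨⟨(x, y), (hE _ _).2 hx⟩, rfl⟩)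
    (by
      rintro ⟨⟨x, y⟩, hxy⟩
      constructor
      · intro h
        obtain rfl : y = 0 := h
        exact ⟨⟨x, ((hE _ _).1 hxy).trans (map_zero π)⟩, rfl⟩
      · rintro ⟨z, hz⟩
        exact (congrArg (fun t => t.1.2) hz).symm)
  convert h2 using 1
  ring

theorem HasChi.unique (hτ : ∀ a b, τ (a * b) = τ (b * a)) {m n : ℕ} {a b : ℚ}
    (ha : HasChi τ m M a) (hb : HasChi τ n M b) : a = b := by
  have ha' := ha.mono hτ (le_max_left m n)
  have hb' := hb.mono hτ (le_max_right m n)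
  clear ha hb
  generalize max m n = l at ha' hb'
  induction l generalizing M a b with
  | zero => exact HasRank.unique hτ ha' hb'
  | succ l ih =>
    obtain ⟨k, p, hp, h⟩ := ha'
    exact sub_right_inj.1 (ih h (hb'.ker_of_projective hτ (HasRank.free k) p hp))

/-- Additivity: the cokernel of an injection between modules of type `FP`. -/
theorem HasChi.of_exact_right (hτ : ∀ a b, τ (a * b) = τ (b * a)) {n : ℕ} {a b : ℚ}
    (hk : HasChi τ n K a) (hm : HasChi τ n M b)
    (i : K →ₗ[R] M) (p : M →ₗ[R] N) (hi : Function.Injective i)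
    (hp : Function.Surjective p) (he : Function.Exact i p) : HasChi τ (n + 1) N (b - a) := by
  obtain ⟨k, π, hπ, h⟩ := hm.succ hτ
  refine ⟨k, p ∘ₗ π, hp.comp hπ, ?_⟩
  let j := LinearEquiv.ofInjective i hi
  have hj : ∀ y : LinearMap.range i, i (j.symm y) = y := fun y =>
    congrArg Subtype.val (j.apply_symm_apply y)
  have hm : ∀ x : LinearMap.ker (p ∘ₗ π), π x ∈ LinearMap.range i := fun x => (he _).1 x.2
  have key : HasChi τ n (LinearMap.ker (p ∘ₗ π)) ((k * τ 1 - b) + a) := by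
    refine h.of_extension hk (Submodule.inclusion fun x hx => ?_)
      (j.symm.toLinearMap ∘ₗ
        LinearMap.codRestrict _ (π ∘ₗ (LinearMap.ker (p ∘ₗ π)).subtype) hm)
      (Submodule.inclusion_injective _) ?_ ?_
    · simp [LinearMap.mem_ker.1 hx]
    · intro y
      obtain ⟨x, hx⟩ := hπ (i y)
      refine ⟨⟨x, by simp [hx, he.apply_apply_eq_zero]⟩, hi ?_⟩
      exact (hj _).trans hx
    · rintro ⟨x, hx⟩
      constructor
      · intro h
        refine ⟨⟨x, ?_⟩, rfl⟩
        exact (hj _).symm.trans ((congrArg i h).trans (map_zero i))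
      · rintro ⟨⟨z, hz⟩, hzx⟩
        apply hi
        obtain rfl : z = x := congrArg Subtype.val hzx
        exact (hj _).trans (LinearMap.mem_ker.1 hz |>.trans (map_zero i).symm)
  convert key using 1
  ring

end Chi

/-! ### Base change -/

section BaseChange

variable {S R : Type} [Ring S] [Ring R]

/-- Every finite subset of `R` lies in a right `S`-submodule of `R` that is generated by a member
of `𝓑`. -/
def IsRightCover (φ : S →+* R) (𝓑 : Set (Finset R)) : Prop :=
  ∀ A : Finset R, ∃ F ∈ 𝓑, ∃ c : R → R → S, ∀ a ∈ A, a = ∑ b ∈ F, b * φ (c a b)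

/-- `ι : M → N` exhibits `N` as the extension of scalars of `M` along `φ`, where the members of `𝓑`
are independent over `M`. -/
structure IsExtension (φ : S →+* R) (𝓑 : Set (Finset R)) {M N : Type} [AddCommGroup M]
    [Module S M] [AddCommGroup N] [Module R N] (ι : M →+ N) : Prop where
  map_smul : ∀ (s : S) (m : M), ι (s • m) = φ s • ι m
  span_range : Submodule.span R (Set.range ι) = ⊤
  eq_zero : ∀ F ∈ 𝓑, ∀ m : R → M, ∑ b ∈ F, b • ι (m b) = 0 → ∀ b ∈ F, m b = 0

variable {φ : S →+* R} {𝓑 : Set (Finset R)} {σ : S →+ ℚ} {τ : R →+ ℚ}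
variable {M N : Type} [AddCommGroup M] [Module S M] [AddCommGroup N] [Module R N] {ι : M →+ N}

theorem IsExtension.exists_extend (hc : IsRightCover φ 𝓑) (h : IsExtension φ 𝓑 ι)
    (f : M →ₗ[S] S) : ∃ g : N →ₗ[R] R, ∀ m, g (ι m) = φ (f m) := by
  let u : (M →₀ R) →ₗ[R] N := Finsupp.linearCombination R ι
  let v : (M →₀ R) →ₗ[R] R := Finsupp.linearCombination R fun m => φ (f m)
  have hu : Function.Surjective u := by
    rw [← LinearMap.range_eq_top, Finsupp.range_linearCombination, h.span_range]
  have huv : LinearMap.ker u ≤ LinearMap.ker v := by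
    classical
    intro x hx
    obtain ⟨F, hF, c, hcF⟩ := hc (x.support.image x)
    have hx' : ∀ m ∈ x.support, x m = ∑ b ∈ F, b * φ (c (x m) b) := fun m hm =>
      hcF _ (Finset.mem_image_of_mem _ hm)
    have hs : ∀ {Q : Type} [AddCommGroup Q] [Module R Q] (y : M → Q),
        ∑ m ∈ x.support, x m • y m = ∑ b ∈ F, ∑ m ∈ x.support, (b * φ (c (x m) b)) • y m := by
      intro Q _ _ y
      rw [Finset.sum_comm]
      refine Finset.sum_congr rfl fun m hm => ?_
      conv_lhs => rw [hx' m hm, Finset.sum_smul]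
    have h0 : ∑ b ∈ F, b • ι (∑ m ∈ x.support, c (x m) b • m) = 0 := by
      rw [LinearMap.mem_ker, Finsupp.linearCombination_apply, Finsupp.sum, hs] at hx
      rw [← hx]
      simp [h.map_smul, Finset.smul_sum, mul_smul]
    have h1 := h.eq_zero F hF (fun b => ∑ m ∈ x.support, c (x m) b • m) h0
    rw [LinearMap.mem_ker, Finsupp.linearCombination_apply, Finsupp.sum, hs]
    refine Finset.sum_eq_zero fun b hb => ?_
    have := congrArg (fun y => b * φ (f y)) (h1 b hb)
    simpa [Finset.mul_sum, mul_assoc] using this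
  refine ⟨(LinearMap.ker u).liftQ v huv ∘ₗ
    (u.quotKerEquivOfSurjective hu).symm.toLinearMap, fun m => ?_⟩
  have : (u.quotKerEquivOfSurjective hu).symm (ι m) =
      Submodule.Quotient.mk (Finsupp.single m 1) := by
    rw [LinearEquiv.symm_apply_eq]
    simp [u, LinearMap.quotKerEquivOfSurjective]
  simp only [LinearMap.comp_apply, LinearEquiv.coe_coe, this]
  exact (Submodule.liftQ_apply _ _ _).trans (by simp [v])

theorem HasRank.baseChange (hc : IsRightCover φ 𝓑) (hστ : ∀ s, τ (φ s) = σ s) {q : ℚ}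
    (hm : HasRank σ M q) (h : IsExtension φ 𝓑 ι) : HasRank τ N q := by
  obtain ⟨κ, _, x, f, hf, rfl⟩ := hm
  choose g hg using fun i => h.exists_extend hc (f i)
  refine ⟨κ, inferInstance, fun i => ι (x i), g, fun n => ?_, by simp [hg, hστ]⟩
  have : (∑ i, (g i).smulRight (ι (x i)) : N →ₗ[R] N) = LinearMap.id := by
    refine LinearMap.ext_on_range h.span_range fun m => ?_
    conv_rhs => rw [← hf m]
    simp [hg, h.map_smul]
  simpa using LinearMap.congr_fun this n

theorem HasChi.baseChange (hc : IsRightCover φ 𝓑) (hφ : IsExtension φ 𝓑 φ.toAddMonoidHom)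
    (hστ : ∀ s, τ (φ s) = σ s) {n : ℕ} {q : ℚ} (hm : HasChi σ n M q)
    (h : IsExtension φ 𝓑 ι) : HasChi τ n N q := by
  induction n generalizing M N q with
  | zero => exact HasRank.baseChange hc hστ hm h
  | succ n ih =>
    classical
    obtain ⟨k, p, hp, hm⟩ := hm
    let j : (Fin k → S) →+ (Fin k → R) := φ.toAddMonoidHom.compLeft (Fin k)
    let p' : (Fin k → R) →ₗ[R] N :=
      Fintype.linearCombination R fun i => ι (p (Pi.single i 1))
    have hj : ∀ (v : Fin k → S), p' (j v) = ι (p v) := fun v => by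
      conv_rhs => rw [← Finset.univ_sum_single v]
      have : ∀ i, p (Pi.single i (v i)) = v i • p (Pi.single i 1) := fun i => by
        rw [← map_smul, ← Pi.single_smul, smul_eq_mul, mul_one]
      simp only [map_sum, this, h.map_smul]
      exact Fintype.linearCombination_apply ..
    have hjs : ∀ (s : S) (v : Fin k → S), j (s • v) = φ s • j v := fun s v =>
      funext fun i => φ.map_mul s (v i)
    have hp' : Function.Surjective p' := by
      rw [← LinearMap.range_eq_top, eq_top_iff, ← h.span_range, Submodule.span_le]
      rintro _ ⟨m, rfl⟩
      obtain ⟨v, rfl⟩ := hp m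
      exact ⟨j v, hj v⟩
    have hjk : ∀ v : LinearMap.ker p, j v ∈ LinearMap.ker p' := fun v => by
      rw [LinearMap.mem_ker, hj, LinearMap.mem_ker.1 v.2, map_zero]
    let ι' : LinearMap.ker p →+ LinearMap.ker p' :=
      { toFun := fun v => ⟨j v, hjk v⟩
        map_zero' := Subtype.ext (map_zero j)
        map_add' := fun v w => Subtype.ext (map_add j v.1 w.1) }
    refine ⟨k, p', hp', ?_⟩
    rw [show τ 1 = σ 1 by rw [← hστ, φ.map_one]]
    refine ih hm (ι := ι') ⟨fun s v => Subtype.ext (hjs s v), ?_, ?_⟩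
    · rw [eq_top_iff]
      rintro ⟨y, hy⟩ -
      obtain ⟨F, hF, c, hcF⟩ := hc (Finset.univ.image y)
      have hy' : y = ∑ b ∈ F, b • j fun i => c (y i) b := funext fun i => by
        rw [Finset.sum_apply]
        exact hcF _ (Finset.mem_image_of_mem _ (Finset.mem_univ _))
      have hz := h.eq_zero F hF (fun b => p fun i => c (y i) b) (by
        rw [LinearMap.mem_ker, hy', map_sum] at hy
        simpa only [map_smul, hj] using hy)
      have : (⟨y, hy⟩ : LinearMap.ker p') =
          ∑ b ∈ F.attach, b.1 • ι' ⟨fun i => c (y i) b.1, hz b.1 b.2⟩ := by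
        refine Subtype.ext (hy'.trans ?_)
        rw [← Finset.sum_attach, Submodule.coe_sum]
        rfl
      rw [this]
      exact Submodule.sum_mem _ fun b _ =>
        Submodule.smul_mem _ _ (Submodule.subset_span ⟨_, rfl⟩)
    · intro F hF v hv b hb
      refine Subtype.ext (funext fun i => hφ.eq_zero F hF (fun b => (v b).1 i) ?_ b hb)
      have := congrFun (congrArg Subtype.val hv) i
      rw [Submodule.coe_sum, Finset.sum_apply] at this
      exact this

end BaseChange

/-! ### Restriction of scalars -/

section Restriction

variable {S R : Type} [Ring S] [Ring R]

/-- `R` is a free left `S`-module with basis `b` and coordinates `c`, and the trace `σ` on `S`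
is compatible with the trace `τ` on `R`. -/
structure IsTracedBasis (φ : S →+* R) (σ : S →+ ℚ) (τ : R →+ ℚ) {κ : Type} [Fintype κ]
    (b : κ → R) (c : κ → R →+ S) : Prop where
  map_mul : ∀ k s r, c k (φ s * r) = s * c k r
  sum_eq : ∀ r, ∑ k, φ (c k r) * b k = r
  trace_eq : ∀ k r, σ (c k (b k * r)) = τ r

variable {φ : S →+* R} {σ : S →+ ℚ} {τ : R →+ ℚ} {κ : Type} [Fintype κ] {b : κ → R}
  {c : κ → R →+ S} {M : Type} [AddCommGroup M] [Module R M] [Module S M]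

theorem HasRank.restrict (hb : IsTracedBasis φ σ τ b c) (h : ∀ (s : S) (m : M), s • m = φ s • m)
    {q : ℚ} (hm : HasRank τ M q) : HasRank σ M (Fintype.card κ * q) := by
  obtain ⟨ι, _, x, f, hf, rfl⟩ := hm
  refine ⟨κ × ι, inferInstance, fun i => b i.1 • x i.2, fun i =>
    { toFun := fun m => c i.1 (f i.2 m)
      map_add' := by simp
      map_smul' := fun s m => by simp [h, hb.map_mul] }, fun m => ?_, ?_⟩
  · rw [Fintype.sum_prod_type_right]
    conv_rhs => rw [← hf m]
    refine Finset.sum_congr rfl fun i _ => ?_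
    conv_rhs => rw [← hb.sum_eq (f i m), Finset.sum_smul]
    simp [h, mul_smul]
  · rw [Fintype.sum_prod_type]
    simp [hb.trace_eq]

theorem HasChi.restrict (hσ : ∀ a b, σ (a * b) = σ (b * a)) (hb : IsTracedBasis φ σ τ b c)
    (h : ∀ (s : S) (m : M), s • m = φ s • m)
    {n : ℕ} {q : ℚ} (hm : HasChi τ n M q) : HasChi σ n M (Fintype.card κ * q) := by
  induction n generalizing M q with
  | zero => exact HasRank.restrict hb h hm
  | succ n ih =>
    obtain ⟨k, p, hp, hm⟩ := hm
    let : Module S (Fin k → R) := Module.compHom _ φ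
    let : Module S (LinearMap.ker p) := Module.compHom _ φ
    have h1 := ih (fun _ _ => rfl) hm
    have h2 : HasRank σ (Fin k → R) _ :=
      HasRank.restrict hb (fun _ _ => rfl) (HasRank.free (τ := τ) k)
    have h3 := h1.of_exact_right hσ (HasChi.mono hσ (Nat.zero_le n) h2)
      { (LinearMap.ker p).subtype.toAddMonoidHom with map_smul' := fun _ _ => rfl }
      { p.toAddMonoidHom with
        map_smul' := fun s m => (p.map_smul (φ s) m).trans (h s (p m)).symm }
      (Submodule.injective_subtype _) hp (exact_subtype_ker p)
    convert h3 using 1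
    ring

/-- If modules that become finitely generated projective by restriction to `S` are finitely
generated projective, then modules that become of type `FP` by restriction to `S` are of
type `FP`. -/
theorem HasChi.of_restrict (hσ : ∀ a b, σ (a * b) = σ (b * a)) (hb : IsTracedBasis φ σ τ b c)
    (hproj : ∀ (M : Type) [AddCommGroup M] [Module R M] [Module S M],
      (∀ (s : S) (m : M), s • m = φ s • m) → ∀ q, HasRank σ M q → ∃ q', HasRank τ M q')
    (h : ∀ (s : S) (m : M), s • m = φ s • m)
    {n : ℕ} {q : ℚ} (hm : HasChi σ n M q) : ∃ q', HasChi τ n M q' := by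
  induction n generalizing M q with
  | zero => exact hproj M h q hm
  | succ n ih =>
    obtain ⟨k, p, hp, -⟩ := id hm
    let p' : (Fin k → R) →ₗ[R] M := Fintype.linearCombination R fun i => p (Pi.single i 1)
    have hp' : Function.Surjective p' := fun m => by
      obtain ⟨v, rfl⟩ := hp m
      refine ⟨fun i => φ (v i), ?_⟩
      conv_rhs => rw [← Finset.univ_sum_single v]
      have : ∀ i, p (Pi.single i (v i)) = v i • p (Pi.single i 1) := fun i => by
        rw [← map_smul, ← Pi.single_smul, smul_eq_mul, mul_one]
      simp only [map_sum, this, h]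
      exact Fintype.linearCombination_apply ..
    let : Module S (Fin k → R) := Module.compHom _ φ
    let : Module S (LinearMap.ker p') := Module.compHom _ φ
    have h2 : HasRank σ (Fin k → R) _ :=
      HasRank.restrict hb (fun _ _ => rfl) (HasRank.free (τ := τ) k)
    have h3 := hm.ker_of_projective hσ h2
      { p'.toAddMonoidHom with
        map_smul' := fun s m => (p'.map_smul (φ s) m).trans (h s (p' m)).symm } hp'
    obtain ⟨q', hq'⟩ := ih (M := LinearMap.ker p') (fun _ _ => rfl)
      (HasChi.of_ker h3
        { (LinearMap.ker p').subtype.toAddMonoidHom with map_smul' := fun _ _ => rfl }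
        (Submodule.injective_subtype _) (exact_subtype_ker p'))
    refine ⟨k * τ 1 - q', k, p', hp', ?_⟩
    rwa [sub_sub_cancel]

end Restriction

/-! ### Group rings -/

section GroupRing

/-- The Kaplansky trace of a group ring, with values in `ℚ` through `c`. -/
def kaplanskyTrace {k : Type} [Ring k] (c : k →+* ℚ) (G : Type) [Group G] :
    MonoidAlgebra k G →+ ℚ where
  toFun x := c (x.coeff 1)
  map_zero' := by simp
  map_add' := by simp

theorem kaplanskyTrace_apply {k : Type} [Ring k] (c : k →+* ℚ) {G : Type} [Group G]
    (x : MonoidAlgebra k G) : kaplanskyTrace c G x = c (x.coeff 1) := rfl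

theorem kaplanskyTrace_mul_comm {k : Type} [CommRing k] (c : k →+* ℚ) {G : Type} [Group G]
    (x y : MonoidAlgebra k G) :
    kaplanskyTrace c G (x * y) = kaplanskyTrace c G (y * x) := by
  induction x using MonoidAlgebra.induction_linear with
  | zero => simp
  | add x x' hx hx' => rw [add_mul, mul_add, map_add, map_add, hx, hx']
  | single g r => 
    rw [kaplanskyTrace_apply, kaplanskyTrace_apply, MonoidAlgebra.coeff_single_mul_apply,
      MonoidAlgebra.coeff_mul_single_apply, mul_one, one_mul, mul_comm]

/-- Precomposition of coefficients with an injective map. -/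
noncomputable def coeffComap {Λ Γ : Type} (e : Λ → Γ) (he : Function.Injective e) :
    MonoidAlgebra ℚ Γ →+ MonoidAlgebra ℚ Λ where
  toFun x := .ofCoeff (x.coeff.comapDomain e he.injOn)
  map_zero' := by ext; simp
  map_add' := fun x y => by ext; simp

theorem coeff_coeffComap {Λ Γ : Type} (e : Λ → Γ) (he : Function.Injective e)
    (x : MonoidAlgebra ℚ Γ) (l : Λ) :
    (coeffComap e he x).coeff l = x.coeff (e l) := rfl

variable {Λ Γ : Type} [Group Λ] [Group Γ] {j : Λ →* Γ}

theorem coeff_mapDomainRingHom_map (hj : Function.Injective j) (x : MonoidAlgebra ℚ Λ) (l : Λ) :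
    (MonoidAlgebra.mapDomainRingHom ℚ j x).coeff (j l) = x.coeff l :=
  Finsupp.mapDomain_apply hj _ _

theorem coeff_mapDomainRingHom_of_notMem (x : MonoidAlgebra ℚ Λ) {g : Γ} (hg : g ∉ j.range) :
    (MonoidAlgebra.mapDomainRingHom ℚ j x).coeff g = 0 :=
  Finsupp.mapDomain_of_notMem_range _ _ hg

theorem out_inv_mul_mem_range_iff (t : Γ ⧸ j.range) (g : Γ) :
    t.out⁻¹ * g ∈ j.range ↔ t = g := by
  rw [← QuotientGroup.eq, QuotientGroup.out_eq']

theorem isTracedBasis_mapDomainRingHom (hj : Function.Injective j) [Fintype (Γ ⧸ j.range)] :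
    IsTracedBasis (MonoidAlgebra.mapDomainRingHom ℚ j) (kaplanskyTrace (RingHom.id ℚ) Λ)
      (kaplanskyTrace (RingHom.id ℚ) Γ)
      (fun t : Γ ⧸ j.range => MonoidAlgebra.single t.out⁻¹ 1)
      (fun t => coeffComap (fun l => j l * t.out⁻¹)
        ((mul_left_injective _).comp hj)) where
  map_mul t s r := by
    induction s using MonoidAlgebra.induction_linear with
    | zero => simp
    | add x y hx hy => simp only [map_add, add_mul, hx, hy]
    | single l q =>
      ext l'
      simp [coeff_coeffComap, MonoidAlgebra.coeff_single_mul_apply, mul_assoc]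
  sum_eq r := by
    ext g
    rw [MonoidAlgebra.coeff_sum, Finsupp.finsetSum_apply,
      Finset.sum_eq_single ((g⁻¹ : Γ) : Γ ⧸ j.range)]
    · obtain ⟨l, hl⟩ := (out_inv_mul_mem_range_iff ((g⁻¹ : Γ) : Γ ⧸ j.range) g⁻¹).2 rfl
      rw [MonoidAlgebra.coeff_mul_single_apply, inv_inv, mul_one]
      have : g * ((g⁻¹ : Γ) : Γ ⧸ j.range).out = j l⁻¹ := by rw [map_inv, hl]; simp
      rw [this, coeff_mapDomainRingHom_map hj, coeff_coeffComap, ← this]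
      simp
    · intro t _ ht
      rw [MonoidAlgebra.coeff_mul_single_apply, coeff_mapDomainRingHom_of_notMem, zero_mul]
      rw [inv_inv]
      refine fun h => ht ((out_inv_mul_mem_range_iff t g⁻¹).1 ?_)
      simpa using inv_mem h
    · simp
  trace_eq t r := by
    simp [kaplanskyTrace_apply, coeff_coeffComap, MonoidAlgebra.coeff_single_mul_apply]

/-- The basis of `ℚΓ` over `ℚΛ` that is given by representatives of the left cosets of the range
of `j`. -/
noncomputable def cosetRep (j : Λ →* Γ) : Γ ⧸ j.range ↪ MonoidAlgebra ℚ Γ where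
  toFun t := MonoidAlgebra.single t.out 1
  inj' := (MonoidAlgebra.single_left_injective one_ne_zero).comp Quotient.out_injective

theorem cosetRep_apply (j : Λ →* Γ) (t : Γ ⧸ j.range) :
    cosetRep j t = MonoidAlgebra.single t.out 1 := rfl

/-- The finite families of representatives of left cosets of the range of `j`. -/
def cosetFamilies (j : Λ →* Γ) : Set (Finset (MonoidAlgebra ℚ Γ)) :=
  Set.range (Finset.map (cosetRep j))

theorem isRightCover_cosetFamilies (hj : Function.Injective j) :
    IsRightCover (MonoidAlgebra.mapDomainRingHom ℚ j) (cosetFamilies j) := by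
  classical
  intro A
  have hinv : ∀ t : Γ ⧸ j.range,
      Function.invFun (cosetRep j) (MonoidAlgebra.single t.out 1) = t :=
    Function.leftInverse_invFun (cosetRep j).injective
  refine ⟨_, ⟨A.biUnion fun a => a.coeff.support.image (QuotientGroup.mk (s := j.range)), rfl⟩,
    fun a b => coeffComap (fun l => (Function.invFun (cosetRep j) b).out * j l)
      ((mul_right_injective _).comp hj) a, fun a ha => ?_⟩
  rw [Finset.sum_map]
  ext g
  simp only [hinv, cosetRep_apply, MonoidAlgebra.coeff_sum, Finsupp.finsetSum_apply,
    MonoidAlgebra.coeff_single_mul_apply, one_mul]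
  rw [Finset.sum_eq_single (g : Γ ⧸ j.range)]
  · obtain ⟨l, hl⟩ := (out_inv_mul_mem_range_iff (g : Γ ⧸ j.range) g).2 rfl
    rw [← hl, coeff_mapDomainRingHom_map hj, coeff_coeffComap, hl, mul_inv_cancel_left]
  · intro t _ ht
    exact coeff_mapDomainRingHom_of_notMem _ fun h => ht ((out_inv_mul_mem_range_iff t g).1 h)
  · intro hg
    obtain ⟨l, hl⟩ := (out_inv_mul_mem_range_iff (g : Γ ⧸ j.range) g).2 rfl
    rw [← hl, coeff_mapDomainRingHom_map hj, coeff_coeffComap, hl, mul_inv_cancel_left]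
    by_contra h
    exact hg (Finset.mem_biUnion.2 ⟨a, ha, Finset.mem_image_of_mem _ (Finsupp.mem_support_iff.2 h)⟩)

theorem isExtension_mapDomainRingHom (hj : Function.Injective j) :
    IsExtension (MonoidAlgebra.mapDomainRingHom ℚ j) (cosetFamilies j)
      (MonoidAlgebra.mapDomainRingHom ℚ j).toAddMonoidHom where
  map_smul s m := map_mul (MonoidAlgebra.mapDomainRingHom ℚ j) s m
  span_range := (Ideal.eq_top_iff_one _).2
    (Submodule.subset_span ⟨1, (MonoidAlgebra.mapDomainRingHom ℚ j).map_one⟩)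
  eq_zero := by
    rintro _ ⟨T, rfl⟩ m hm b hb
    obtain ⟨t, ht, rfl⟩ := Finset.mem_map.1 hb
    rw [Finset.sum_map] at hm
    ext l
    have := congrArg (fun x => x.coeff (t.out * j l)) hm
    simp only [MonoidAlgebra.coeff_sum, Finsupp.finsetSum_apply, cosetRep_apply,
      smul_eq_mul, MonoidAlgebra.coeff_single_mul_apply, one_mul] at this
    rw [Finset.sum_eq_single t] at this
    · rw [inv_mul_cancel_left] at this
      exact (coeff_mapDomainRingHom_map hj _ _).symm.trans this
    · intro t' _ ht'
      refine coeff_mapDomainRingHom_of_notMem _ fun h => ht' ?_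
      rw [(out_inv_mul_mem_range_iff t' _).1 h]
      conv_rhs => rw [← t.out_eq']
      exact QuotientGroup.mk_mul_of_mem _ ⟨l, rfl⟩
    · exact fun h => (h ht).elim

theorem exists_hasRank_of_restrict [Fintype (Γ ⧸ j.range)] (M : Type)
    [AddCommGroup M] [Module (MonoidAlgebra ℚ Γ) M] [Module (MonoidAlgebra ℚ Λ) M]
    (h : ∀ (s : MonoidAlgebra ℚ Λ) (m : M), s • m = MonoidAlgebra.mapDomainRingHom ℚ j s • m)
    (q : ℚ) (hM : HasRank (kaplanskyTrace (RingHom.id ℚ) Λ) M q) :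
    ∃ q', HasRank (kaplanskyTrace (RingHom.id ℚ) Γ) M q' := by
  obtain ⟨ι, _, x, f, hf, -⟩ := hM
  let φ := MonoidAlgebra.mapDomainRingHom ℚ j
  let δ : Γ → MonoidAlgebra ℚ Γ := fun g => MonoidAlgebra.single g 1
  have hδ : ∀ a b, δ (a * b) = δ a * δ b := fun a b => by simp [δ, MonoidAlgebra.single_mul_single]
  have hδ1 : δ 1 = 1 := rfl
  let u : ι → Γ → M → MonoidAlgebra ℚ Γ := fun i g m => δ g * φ (f i (δ g⁻¹ • m))
  have hu : ∀ i g l m, u i (g * j l) m = u i g m := fun i g l m => by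
    have h1 : ∀ l, δ (j l) = φ (MonoidAlgebra.single l 1) := fun l => by
      simp [δ, φ]
    simp only [u, mul_inv_rev, hδ, ← map_inv, h1, mul_smul]
    rw [← h, map_smul, smul_eq_mul, map_mul, mul_assoc, ← mul_assoc (φ _), ← map_mul,
      MonoidAlgebra.single_mul_single]
    simp [← MonoidAlgebra.one_def]
  let U : ι → M → Γ ⧸ j.range → MonoidAlgebra ℚ Γ := fun i m =>
    Quotient.lift (fun g => u i g m) fun a b hab => by
      obtain ⟨l, hl⟩ := QuotientGroup.leftRel_apply.1 hab
      rw [← hu i a l, hl, mul_inv_cancel_left]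
  have hU : ∀ i m t, U i m t = u i t.out m := fun i m t => by
    conv_lhs => rw [← t.out_eq']
    rfl
  let ν : MonoidAlgebra ℚ Γ := MonoidAlgebra.single 1 ((Fintype.card (Γ ⧸ j.range) : ℚ)⁻¹)
  have hν : ∀ x, ν * x = x * ν := fun x => (MonoidAlgebra.single_one_comm _ x)
  have hcard : (Fintype.card (Γ ⧸ j.range) : ℚ) ≠ 0 := Nat.cast_ne_zero.2 Fintype.card_ne_zero
  have hUadd : ∀ i m m' t, U i (m + m') t = U i m t + U i m' t := fun i m m' t => by
    simp [hU, u, mul_add]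
  have hUsmul : ∀ i g q m t, U i ((MonoidAlgebra.single g q : MonoidAlgebra ℚ Γ) • m) t =
      (MonoidAlgebra.single g q : MonoidAlgebra ℚ Γ) * U i m (g⁻¹ • t) := fun i g q m t => by
    induction t using QuotientGroup.induction_on with
    | H a =>
    change u i a _ = _ * u i (g⁻¹ * a) m
    have h1 : (MonoidAlgebra.single g q : MonoidAlgebra ℚ Γ) =
        δ g * φ (MonoidAlgebra.single 1 q) := by
      simp [δ, φ, MonoidAlgebra.single_mul_single]
    have h2 : ∀ x, φ (MonoidAlgebra.single 1 q) * x = x * φ (MonoidAlgebra.single 1 q) :=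
        fun x => by
      simpa [φ] using MonoidAlgebra.single_one_comm q x
    simp only [u, h1]
    rw [← mul_smul, ← mul_assoc, ← hδ, ← h2, mul_smul, ← h, map_smul, smul_eq_mul, map_mul]
    rw [mul_inv_rev, inv_inv, mul_assoc (δ g), ← mul_assoc _ (δ (g⁻¹ * a)), h2 (δ (g⁻¹ * a)),
      mul_assoc (δ (g⁻¹ * a)), ← mul_assoc (δ g), ← hδ, mul_inv_cancel_left]
  let F : ι → M →ₗ[MonoidAlgebra ℚ Γ] MonoidAlgebra ℚ Γ := fun i =>
    { toFun := fun m => ν * ∑ t, U i m t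
      map_add' := fun m m' => by simp [hUadd, Finset.sum_add_distrib, mul_add]
      map_smul' := fun r m => by
        induction r using MonoidAlgebra.induction_linear with
        | zero =>
          simp [hU, u]
        | add r r' hr hr' =>
          simp only [RingHom.id_apply] at hr hr' ⊢
          rw [add_smul, add_smul, ← hr, ← hr', ← mul_add, ← Finset.sum_add_distrib]
          simp only [hUadd]
        | single g q =>
          simp only [hUsmul, ← Finset.mul_sum, RingHom.id_apply, smul_eq_mul]
          rw [← mul_assoc, hν, mul_assoc]
          congr 2
          exact Equiv.sum_comp (MulAction.toPerm g⁻¹) (U i m) }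
  refine ⟨_, ι, inferInstance, x, F, fun m => ?_, rfl⟩
  have h1 : ∀ t : Γ ⧸ j.range, ∑ i, U i m t • x i = m := fun t => by
    simp only [hU, u, mul_smul, ← Finset.smul_sum, φ, ← h, hf]
    rw [← mul_smul, ← hδ, mul_inv_cancel, hδ1, one_smul]
  have h2 : ∑ i, F i m • x i = ν • ∑ t : Γ ⧸ j.range, ∑ i, U i m t • x i := by
    rw [Finset.sum_comm]
    simp only [← Finset.sum_smul, Finset.smul_sum, ← mul_smul]
    rfl
  rw [h2]
  simp only [h1, Finset.sum_const, Finset.card_univ]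
  rw [← Nat.cast_smul_eq_nsmul (MonoidAlgebra ℚ Γ), ← mul_smul, MonoidAlgebra.natCast_def,
    MonoidAlgebra.single_mul_single, inv_mul_cancel₀ hcard, mul_one,
    ← MonoidAlgebra.one_def, one_smul]

end GroupRing

/-! ### Clearing denominators -/

section Denominators

variable {L : Type} [Group L]

/-- The one-element families consisting of the inverse of a nonzero natural number. -/
def invNatFamilies (L : Type) [Group L] : Set (Finset (MonoidAlgebra ℚ L)) :=
  {F | ∃ N : ℕ, N ≠ 0 ∧ F = {MonoidAlgebra.single 1 (N : ℚ)⁻¹}}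

theorem single_inv_mul_natCast {N : ℕ} (hN : N ≠ 0) :
    (MonoidAlgebra.single 1 (N : ℚ)⁻¹ : MonoidAlgebra ℚ L) * N = 1 := by
  rw [MonoidAlgebra.natCast_def, MonoidAlgebra.single_mul_single, mul_one,
    inv_mul_cancel₀ (Nat.cast_ne_zero.2 hN), MonoidAlgebra.one_def]

theorem exists_nsmul_eq_mapRingHom (a : MonoidAlgebra ℚ L) :
    ∃ N : ℕ, N ≠ 0 ∧ ∃ y, N • a = MonoidAlgebra.mapRingHom L (Int.castRingHom ℚ) y := by
  induction a using MonoidAlgebra.induction_linear with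
  | zero => exact ⟨1, one_ne_zero, 0, by simp⟩
  | add a b ha hb =>
    obtain ⟨N, hN, y, hy⟩ := ha
    obtain ⟨N', hN', y', hy'⟩ := hb
    refine ⟨N * N', mul_ne_zero hN hN', N' • y + N • y', ?_⟩
    rw [map_add, map_nsmul, map_nsmul, ← hy, ← hy', smul_add, mul_comm, mul_smul, mul_comm,
      mul_smul]
  | single g r =>
    refine ⟨r.den, r.den_ne_zero, MonoidAlgebra.single g r.num, ?_⟩
    rw [MonoidAlgebra.smul_single, MonoidAlgebra.mapRingHom_single, nsmul_eq_mul,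
      Rat.den_mul_eq_num]
    rfl

theorem isRightCover_invNatFamilies :
    IsRightCover (MonoidAlgebra.mapRingHom L (Int.castRingHom ℚ)) (invNatFamilies L) := by
  classical
  intro A
  choose N hN y hy using exists_nsmul_eq_mapRingHom (L := L)
  refine ⟨_, ⟨∏ a ∈ A, N a, Finset.prod_ne_zero_iff.2 fun a _ => hN a, rfl⟩,
    fun a _ => (∏ b ∈ A.erase a, N b) • y a, fun a ha => ?_⟩
  rw [Finset.sum_singleton, map_nsmul, ← hy, ← mul_smul, Finset.prod_erase_mul _ _ ha,
    ← Nat.cast_smul_eq_nsmul (MonoidAlgebra ℚ L), smul_eq_mul, ← mul_assoc,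
    single_inv_mul_natCast (Finset.prod_ne_zero_iff.2 fun a _ => hN a), one_mul]

theorem isExtension_invNatFamilies {M N : Type} [AddCommGroup M] [Module (MonoidAlgebra ℤ L) M]
    [AddCommGroup N] [Module (MonoidAlgebra ℚ L) N] (ι : M →+ N)
    (hι : ∀ s m, ι (s • m) = MonoidAlgebra.mapRingHom L (Int.castRingHom ℚ) s • ι m)
    (hinj : Function.Injective ι) (hN : ∀ n : N, ∃ k : ℕ, k ≠ 0 ∧ ∃ m, k • n = ι m) :
    IsExtension (MonoidAlgebra.mapRingHom L (Int.castRingHom ℚ)) (invNatFamilies L) ι where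
  map_smul := hι
  span_range := by
    rw [eq_top_iff]
    intro n _
    obtain ⟨k, hk, m, hm⟩ := hN n
    have : n = (MonoidAlgebra.single 1 (k : ℚ)⁻¹ : MonoidAlgebra ℚ L) • ι m := by
      rw [← hm, ← Nat.cast_smul_eq_nsmul (MonoidAlgebra ℚ L), ← mul_smul,
        single_inv_mul_natCast hk, one_smul]
    rw [this]
    exact Submodule.smul_mem _ _ (Submodule.subset_span ⟨m, rfl⟩)
  eq_zero := by
    rintro _ ⟨k, hk, rfl⟩ m hm b hb
    obtain rfl := Finset.mem_singleton.1 hb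
    rw [Finset.sum_singleton] at hm
    apply hinj
    have := congrArg (fun n => (k : MonoidAlgebra ℚ L) • n) hm
    rw [map_zero]
    rwa [smul_zero, ← mul_smul, Nat.cast_comm, single_inv_mul_natCast hk, one_smul] at this

end Denominators

/-! ### Finite free resolutions -/

section Resolution

variable {G : Type} [Group G]

theorem HasChi.range_of_resolution {R : Type} [Ring R] {τ : R →+ ℚ}
    (hτ : ∀ a b, τ (a * b) = τ (b * a)) {X : ℕ → Type} [∀ i, AddCommGroup (X i)]
    [∀ i, Module R (X i)] {r : ℕ → ℕ} (hX : ∀ i, HasRank τ (X i) (r i))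
    (h0 : ∀ i, r i = 0 → Subsingleton (X i))
    (d : ∀ i, X (i + 1) →ₗ[R] X i) (hd : ∀ i, Function.Exact (d (i + 1)) (d i)) (m i : ℕ)
    (hr : ∀ j, i + m < j → r j = 0) :
    HasChi τ m (LinearMap.range (d i)) (∑ j ∈ Finset.range m, (-1) ^ j * (r (i + 1 + j) : ℚ)) := by
  induction m generalizing i with
  | zero =>
    have := h0 (i + 1) (hr _ (by simp))
    have : Subsingleton (LinearMap.range (d i)) := by
      refine ⟨?_⟩
      rintro ⟨_, x, rfl⟩ ⟨_, y, rfl⟩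
      exact Subtype.ext (congrArg (d i) (Subsingleton.elim x y))
    exact HasRank.zero
  | succ m ih =>
    have := (ih (i + 1) fun j hj => hr j (by omega)).of_exact_right hτ
      (HasChi.mono hτ (Nat.zero_le m) (hX (i + 1))) (LinearMap.range (d (i + 1))).subtype
      (d i).rangeRestrict (Submodule.injective_subtype _) (d i).surjective_rangeRestrict ?_
    · rw [Finset.sum_range_succ']
      convert this using 1
      simp [pow_succ, add_comm, add_left_comm, sub_eq_add_neg]
    · rw [LinearMap.exact_iff, LinearMap.ker_rangeRestrict, Submodule.range_subtype]
      exact LinearMap.exact_iff.1 (hd i)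

theorem HasChi.of_resolution {R : Type} [Ring R] {τ : R →+ ℚ}
    (hτ : ∀ a b, τ (a * b) = τ (b * a)) (hτ1 : τ 1 = 1) {Z : ModuleCat R}
    (P : ProjectiveResolution Z) {n : ℕ} {r : ℕ → ℕ}
    (hP : ∀ i, Nonempty (P.complex.X i ≃ₗ[R] (Fin (r i) →₀ R))) (hr : ∀ i, n < i → r i = 0) :
    HasChi τ (n + 1) Z (∑ i ∈ Finset.range (n + 1), (-1) ^ i * (r i : ℚ)) := by
  have hX : ∀ i, HasRank τ (P.complex.X i) (r i) := fun i => by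
    obtain ⟨e⟩ := hP i
    simpa [hτ1] using
      (HasRank.free (τ := τ) (r i)).congr (e.trans (Finsupp.linearEquivFunOnFinite R R _)).symm
  have h0 : ∀ i, r i = 0 → Subsingleton (P.complex.X i) := fun i hi => by
    obtain ⟨e⟩ := hP i
    rw [hi] at e
    exact e.toEquiv.subsingleton
  have hd : ∀ i, Function.Exact (P.complex.d (i + 1 + 1) (i + 1)).hom (P.complex.d (i + 1) i).hom :=
    fun i => (ShortComplex.ShortExact.moduleCat_exact_iff_function_exact _).1 (P.exact_succ i)
  have h := HasChi.range_of_resolution hτ (X := fun i => P.complex.X i) hX h0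
    (fun i => (P.complex.d (i + 1) i).hom) hd n 0 fun j hj => hr j (by omega)
  have := h.of_exact_right (N := Z) hτ (HasChi.mono hτ (Nat.zero_le n) (hX 0))
    (LinearMap.range _).subtype (P.π.f 0).hom (Submodule.injective_subtype _)
    ((ModuleCat.epi_iff_surjective _).1 inferInstance) ?_
  · rw [Finset.sum_range_succ']
    convert this using 1
    simp [pow_succ, add_comm, sub_eq_add_neg]
  · have := (ShortComplex.ShortExact.moduleCat_exact_iff_function_exact _).1 P.exact₀
    intro y
    exact (this y).trans ⟨fun h => ⟨⟨y, h⟩, rfl⟩, by rintro ⟨z, rfl⟩; exact z.2⟩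

theorem hasChi_trivial_of_hasFreeResOfRanks {n : ℕ} {r : ℕ → ℕ} (h : HasFreeResOfRanks G n r) :
    HasChi (kaplanskyTrace (RingHom.id ℚ) G) (n + 1) (Representation.trivial ℚ G ℚ).asModule
      (∑ i ∈ Finset.range (n + 1), (-1) ^ i * (r i : ℚ)) := by
  obtain ⟨P, hP, hr⟩ := h
  have hχ : HasChi (kaplanskyTrace (Int.castRingHom ℚ) G) (n + 1)
      (Representation.trivial ℤ G ℤ).asModule
      (∑ i ∈ Finset.range (n + 1), (-1) ^ i * (r i : ℚ)) :=
      HasChi.of_resolution (kaplanskyTrace_mul_comm (Int.castRingHom ℚ))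
    (by simp [kaplanskyTrace_apply]) P hP hr
  let ι : (Representation.trivial ℤ G ℤ).asModule →+ (Representation.trivial ℚ G ℚ).asModule :=
    (Int.castRingHom ℚ).toAddMonoidHom
  have hinj : Function.Injective (MonoidAlgebra.mapRingHom G (Int.castRingHom ℚ)) :=
    MonoidAlgebra.map_injective _ (RingHom.injective_int (Int.castRingHom ℚ))
  refine HasChi.baseChange isRightCover_invNatFamilies
    (isExtension_invNatFamilies (MonoidAlgebra.mapRingHom G (Int.castRingHom ℚ)).toAddMonoidHom
      (fun s m => map_mul (MonoidAlgebra.mapRingHom G (Int.castRingHom ℚ)) s m) hinj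
      exists_nsmul_eq_mapRingHom) (fun s => ?_) hχ
    (isExtension_invNatFamilies (M := (Representation.trivial ℤ G ℤ).asModule) ι ?_ ?_ ?_)
  · rw [kaplanskyTrace_apply, kaplanskyTrace_apply]
    rfl
  · intro s m
    induction s using MonoidAlgebra.induction_linear with
    | zero => simp
    | add x y hx hy => simp only [add_smul, map_add, hx, hy]
    | single g k =>
      rw [MonoidAlgebra.mapRingHom_single, Representation.single_smul, Representation.single_smul]
      exact map_mul (Int.castRingHom ℚ) k m
  · exact RingHom.injective_int (Int.castRingHom ℚ)
  · intro q
    exact ⟨q.den, q.den_ne_zero, q.num, (nsmul_eq_mul _ _).trans (Rat.den_mul_eq_num q)⟩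

end Resolution

/-! ### Rational Euler characteristics of groups -/

section EulerChar

variable {Λ Γ : Type} [Group Λ] [Group Γ] {j : Λ →* Γ}

/-- The trivial `ℚG`-module is of type `FP` with Euler characteristic `q`, computed with the
Kaplansky trace. -/
def HasRatChi (G : Type) [Group G] (q : ℚ) : Prop :=
  ∃ n, HasChi (kaplanskyTrace (RingHom.id ℚ) G) n (Representation.trivial ℚ G ℚ).asModule q

theorem HasRatChi.unique {p q : ℚ} (hp : HasRatChi Γ p) (hq : HasRatChi Γ q) : p = q :=
  hp.choose_spec.unique (kaplanskyTrace_mul_comm _) hq.choose_spec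

/-- The trivial module structure on `ℚ`. -/
noncomputable abbrev trivialModule (G : Type) [Group G] : Module (MonoidAlgebra ℚ G) ℚ :=
  inferInstanceAs (Module _ (Representation.trivial ℚ G ℚ).asModule)

theorem trivial_smul_eq_mapDomainRingHom_smul (j : Λ →* Γ) (s : MonoidAlgebra ℚ Λ)
    (m : (Representation.trivial ℚ Λ ℚ).asModule) :
    s • m = (MonoidAlgebra.mapDomainRingHom ℚ j s •
      (show (Representation.trivial ℚ Γ ℚ).asModule from m) :) := by
  induction s using MonoidAlgebra.induction_linear with
  | zero => rw [map_zero, zero_smul, zero_smul]; rfl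
  | add x y hx hy => rw [map_add, add_smul, add_smul, hx, hy]; rfl
  | single g k =>
    rw [MonoidAlgebra.mapDomainRingHom_apply, MonoidAlgebra.mapDomain_single,
      Representation.single_smul, Representation.single_smul]
    rfl

theorem HasRatChi.restrict (hj : Function.Injective j) (hi : j.range.index ≠ 0) {q : ℚ}
    (h : HasRatChi Γ q) : HasRatChi Λ (j.range.index * q) := by
  obtain ⟨n, h⟩ := h
  have := Subgroup.fintypeOfIndexNeZero hi
  let : Module (MonoidAlgebra ℚ Λ) (Representation.trivial ℚ Γ ℚ).asModule := trivialModule Λ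
  rw [Subgroup.index_eq_card, Nat.card_eq_fintype_card]
  have h' := HasChi.restrict (M := (Representation.trivial ℚ Γ ℚ).asModule)
    (kaplanskyTrace_mul_comm _) (isTracedBasis_mapDomainRingHom hj)
    (trivial_smul_eq_mapDomainRingHom_smul j) h
  exact ⟨n, h'⟩

theorem HasRatChi.of_restrict (hj : Function.Injective j) (hi : j.range.index ≠ 0) {q : ℚ}
    (h : HasRatChi Λ q) : HasRatChi Γ (q / j.range.index) := by
  obtain ⟨q', hq'⟩ : ∃ q', HasRatChi Γ q' := by
    obtain ⟨n, h⟩ := h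
    have := Subgroup.fintypeOfIndexNeZero hi
    let : Module (MonoidAlgebra ℚ Γ) (Representation.trivial ℚ Λ ℚ).asModule := trivialModule Γ
    obtain ⟨q', h'⟩ := h.of_restrict (kaplanskyTrace_mul_comm _)
      (isTracedBasis_mapDomainRingHom hj) exists_hasRank_of_restrict
      (trivial_smul_eq_mapDomainRingHom_smul j)
    exact ⟨q', n, h'⟩
  rwa [h.unique (hq'.restrict hj hi), mul_div_cancel_left₀ _ (Nat.cast_ne_zero.2 hi)]

theorem EulerCharRel.hasRatChi {q : ℚ} (h : EulerCharRel Γ q) : HasRatChi Γ q := by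
  obtain ⟨K, n, r, hK, h, rfl⟩ := h
  have : K.subtype.range.index ≠ 0 := by rwa [Subgroup.range_subtype]
  simpa using
    HasRatChi.of_restrict K.subtype_injective this ⟨_, hasChi_trivial_of_hasFreeResOfRanks h⟩

/-- The inclusion of `ℚ` into the permutation module of the left cosets of the range of `j` as the
multiples of the trivial coset. -/
noncomputable def trivialCosetHom (j : Λ →* Γ) : (Representation.trivial ℚ Λ ℚ).asModule →+
    (Representation.ofMulAction ℚ Γ (Γ ⧸ j.range)).asModule :=
  MonoidAlgebra.singleAddHom (R := ℚ) ((1 : Γ) : Γ ⧸ j.range)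

theorem single_smul_trivialCosetHom (j : Λ →* Γ) (g : Γ) (k : ℚ)
    (m : (Representation.trivial ℚ Λ ℚ).asModule) :
    MonoidAlgebra.single g k • trivialCosetHom j m =
      MonoidAlgebra.single (g : Γ ⧸ j.range)
        (k * (Representation.trivial ℚ Λ ℚ).asModuleEquiv m) := by
  rw [Representation.single_smul]
  refine (congrArg _ (Representation.ofMulAction_single ..)).trans
    ((MonoidAlgebra.smul_single ..).trans
      (congrArg (fun g : Γ => MonoidAlgebra.single (g : Γ ⧸ j.range) _) (mul_one g)))

theorem isExtension_trivialCosetHom (j : Λ →* Γ) :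
    IsExtension (MonoidAlgebra.mapDomainRingHom ℚ j) (cosetFamilies j) (trivialCosetHom j) where
  map_smul s m := by
    induction s using MonoidAlgebra.induction_linear with
    | zero => rw [map_zero, zero_smul, zero_smul, map_zero]
    | add x y hx hy => rw [map_add, add_smul, add_smul, map_add, hx, hy]
    | single l k =>
      rw [MonoidAlgebra.mapDomainRingHom_apply, MonoidAlgebra.mapDomain_single,
        single_smul_trivialCosetHom]
      have : ((j l : Γ) : Γ ⧸ j.range) = (1 : Γ) :=
        QuotientGroup.eq.2 (by simp)
      rw [this, Representation.single_smul]
      rfl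
  span_range := by
    rw [eq_top_iff]
    rintro n -
    induction n using MonoidAlgebra.induction_linear with
    | zero => exact zero_mem _
    | add x y hx hy => exact add_mem hx hy
    | single t k =>
      obtain ⟨g, rfl⟩ := QuotientGroup.mk_surjective t
      have := single_smul_trivialCosetHom j g k
        ((Representation.trivial ℚ Λ ℚ).asModuleEquiv.symm 1)
      rw [LinearEquiv.apply_symm_apply, mul_one] at this
      rw [← this]
      exact Submodule.smul_mem _ _ (Submodule.subset_span ⟨_, rfl⟩)
  eq_zero := by
    classical
    rintro _ ⟨T, rfl⟩ m hm b hb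
    obtain ⟨t, ht, rfl⟩ := Finset.mem_map.1 hb
    rw [Finset.sum_map] at hm
    let m' : Γ ⧸ j.range → ℚ := fun s =>
      (Representation.trivial ℚ Λ ℚ).asModuleEquiv (m (cosetRep j s))
    have hsum : ∑ s ∈ T, (MonoidAlgebra.single s (m' s) : MonoidAlgebra ℚ (Γ ⧸ j.range)) = 0 := by
      refine Eq.trans (Finset.sum_congr rfl fun s _ => ?_) hm
      rw [cosetRep_apply, single_smul_trivialCosetHom, one_mul, QuotientGroup.out_eq']
      rfl
    have := congrArg (fun x : MonoidAlgebra ℚ (Γ ⧸ j.range) => x.coeff t) hsum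
    simp only [MonoidAlgebra.coeff_sum, Finsupp.finsetSum_apply, MonoidAlgebra.coeff_single,
      Finsupp.single_apply, Finset.sum_ite_eq', ht, if_true, MonoidAlgebra.coeff_zero,
      Finsupp.zero_apply] at this
    exact this

theorem HasRatChi.hasChi_cosets (hj : Function.Injective j) {q : ℚ} (h : HasRatChi Λ q) :
    ∃ n, HasChi (kaplanskyTrace (RingHom.id ℚ) Γ) n
      (Representation.ofMulAction ℚ Γ (Γ ⧸ j.range)).asModule q := by
  obtain ⟨n, h⟩ := h
  refine ⟨n, h.baseChange (isRightCover_cosetFamilies hj) (isExtension_mapDomainRingHom hj)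
    (fun s => ?_) (isExtension_trivialCosetHom j)⟩
  rw [kaplanskyTrace_apply, kaplanskyTrace_apply, ← map_one j, coeff_mapDomainRingHom_map hj]

end EulerChar

/-! ### Permutation modules -/

section Permutation

variable {G X W : Type} [Group G] [MulAction G X] [AddCommGroup W] [Module ℚ W]

/-- The linear extension of a function on `X`. -/
noncomputable def basisLift (v : X → W) : MonoidAlgebra ℚ X →ₗ[ℚ] W :=
  Finsupp.linearCombination ℚ v ∘ₗ (MonoidAlgebra.coeffLinearEquiv ℚ).toLinearMap

theorem basisLift_single (v : X → W) (x : X) (k : ℚ) :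
    basisLift v (MonoidAlgebra.single x k) = k • v x :=
  Finsupp.linearCombination_single ..

/-- The `ℚG`-linear extension of an equivariant function on `X`. -/
noncomputable def permLift (ρ : Representation ℚ G W) (v : X → W)
    (hv : ∀ (g : G) x, v (g • x) = ρ g (v x)) :
    (Representation.ofMulAction ℚ G X).asModule →ₗ[MonoidAlgebra ℚ G] ρ.asModule :=
  let φ : (Representation.ofMulAction ℚ G X).asModule →+ ρ.asModule := (basisLift v).toAddMonoidHom
  { φ with
    map_smul' := fun s m => by
      change φ (s • m) = s • φ m
      induction s using MonoidAlgebra.induction_linear with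
      | zero => rw [zero_smul, map_zero, zero_smul]
      | add s t hs ht => rw [add_smul, map_add, add_smul, hs, ht]
      | single g k =>
        rw [Representation.single_smul, Representation.single_smul]
        refine (map_smul (basisLift v) _ _).trans (congrArg (k • ·) ?_)
        induction m using MonoidAlgebra.induction_linear with
        | zero =>
          exact (map_zero (basisLift v ∘ₗ Representation.ofMulAction ℚ G X g)).trans
            (map_zero (ρ g ∘ₗ basisLift v)).symm
        | add x y hx hy =>
          exact (map_add (basisLift v ∘ₗ Representation.ofMulAction ℚ G X g) x y).trans
            ((congrArg₂ (· + ·) hx hy).trans (map_add (ρ g ∘ₗ basisLift v) x y).symm)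
        | single x r =>
          refine (congrArg (basisLift v) (Representation.ofMulAction_single ..)).trans ?_
          rw [basisLift_single, hv, ← map_smul, ← basisLift_single]
          rfl }

theorem permLift_single (ρ : Representation ℚ G W) (v : X → W)
    (hv : ∀ (g : G) x, v (g • x) = ρ g (v x)) (x : X) (k : ℚ) :
    permLift ρ v hv (MonoidAlgebra.single x k) = k • v x :=
  basisLift_single v x k

/-- The map of permutation modules that is induced by an inclusion of subgroups. -/
noncomputable def cosetProj {P Q : Subgroup G} (h : P ≤ Q) :
    (Representation.ofMulAction ℚ G (G ⧸ P)).asModule →ₗ[MonoidAlgebra ℚ G]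
      (Representation.ofMulAction ℚ G (G ⧸ Q)).asModule :=
  permLift _ (fun t => MonoidAlgebra.single (Subgroup.quotientMapOfLE h t) 1) fun g t => by
    rw [Representation.ofMulAction_single]
    induction t using QuotientGroup.induction_on with
    | H t => rfl

theorem cosetProj_single {P Q : Subgroup G} (h : P ≤ Q) (g : G) (k : ℚ) :
    cosetProj h (MonoidAlgebra.single (g : G ⧸ P) k) = MonoidAlgebra.single (g : G ⧸ Q) k :=
  (permLift_single ..).trans
    ((MonoidAlgebra.smul_single ..).trans (congrArg (MonoidAlgebra.single _) (mul_one k)))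

/-- The augmentation of a permutation module. -/
noncomputable def cosetAug (P : Subgroup G) :
    (Representation.ofMulAction ℚ G (G ⧸ P)).asModule →ₗ[MonoidAlgebra ℚ G]
      (Representation.trivial ℚ G ℚ).asModule :=
  permLift (Representation.trivial ℚ G ℚ) (fun _ => (1 : ℚ)) fun _ _ => rfl

theorem cosetAug_single (P : Subgroup G) (t : G ⧸ P) (k : ℚ) :
    cosetAug P (MonoidAlgebra.single t k) = k :=
  (permLift_single ..).trans (mul_one k)

theorem coset_induction {P : Subgroup G}
    {p : (Representation.ofMulAction ℚ G (G ⧸ P)).asModule → Prop} (zero : p 0)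
    (add : ∀ x y, p x → p y → p (x + y))
    (single : ∀ (x : G) k, p (MonoidAlgebra.single (x : G ⧸ P) k)) (m) : p m := by
  refine MonoidAlgebra.induction_linear (motive := p) m zero add fun t k => ?_
  obtain ⟨x, rfl⟩ := QuotientGroup.mk_surjective t
  exact single x k

end Permutation

/-! ### Amalgamated products -/

section Amalgam

variable {C A B G : Type} [Group C] [Group A] [Group B] [Group G]
  {f : C →* A} {g : C →* B} {iA : A →* G} {iB : B →* G}

theorem IsAmalgamatedProduct.sup_range_eq_top (h : IsAmalgamatedProduct f g iA iB) :
    iA.range ⊔ iB.range = ⊤ := by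
  let S := iA.range ⊔ iB.range
  have hA : ∀ a, iA a ∈ S := fun a => Subgroup.mem_sup_left ⟨a, rfl⟩
  have hB : ∀ b, iB b ∈ S := fun b => Subgroup.mem_sup_right ⟨b, rfl⟩
  obtain ⟨k, ⟨hkA, hkB⟩, -⟩ := h.2 S inferInstance (iA.codRestrict S hA) (iB.codRestrict S hB)
    (MonoidHom.ext fun c => Subtype.ext (DFunLike.congr_fun h.1 c))
  have hk := (h.2 G inferInstance iA iB h.1).unique (y₁ := S.subtype.comp k)
    (y₂ := MonoidHom.id G)
    ⟨by rw [MonoidHom.comp_assoc, hkA]; rfl, by rw [MonoidHom.comp_assoc, hkB]; rfl⟩ ⟨rfl, rfl⟩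
  rw [eq_top_iff]
  intro x _
  rw [← show S.subtype (k x) = x from DFunLike.congr_fun hk x]
  exact (k x).2

theorem IsAmalgamatedProduct.induction_right (h : IsAmalgamatedProduct f g iA iB) {p : G → Prop}
    (one : p 1) (mulA : ∀ x a, p x → p (x * iA a)) (mulB : ∀ x b, p x → p (x * iB b)) (x : G) :
    p x := by
  have hx : x ∈ Subgroup.closure ((iA.range : Set G) ∪ iB.range) := by
    rw [← Subgroup.sup_eq_closure, h.sup_range_eq_top]
    trivial
  have mul : ∀ x, ∀ y ∈ (iA.range : Set G) ∪ iB.range, p x → p (x * y) := by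
    rintro x _ (⟨a, rfl⟩ | ⟨b, rfl⟩)
    exacts [mulA x a, mulB x b]
  induction hx using Subgroup.closure_induction_right with
  | one => exact one
  | mul_right x _ y hy hx => exact mul x y hy hx
  | mul_inv_cancel x _ y hy hx => exact mul x _ (hy.imp iA.range.inv_mem iB.range.inv_mem) hx

theorem IsAmalgamatedProduct.injective (h : IsAmalgamatedProduct f g iA iB)
    (hf : Function.Injective f) (hg : Function.Injective g) :
    Function.Injective iA ∧ Function.Injective iB := by
  let X : Bool → Type := fun i => cond i A B
  let _ : ∀ i, Group (X i) := fun i => match i with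
    | true => ‹Group A›
    | false => ‹Group B›
  let φ : ∀ i, C →* X i := fun i => match i with
    | true => f
    | false => g
  have hφ : ∀ i, Function.Injective (φ i) := fun i => match i with
    | true => hf
    | false => hg
  obtain ⟨k, ⟨hkA, hkB⟩, -⟩ := h.2 (Monoid.PushoutI φ) inferInstance
    (Monoid.PushoutI.of (φ := φ) true) (Monoid.PushoutI.of (φ := φ) false)
    ((Monoid.PushoutI.of_comp_eq_base (φ := φ) true).trans
     (Monoid.PushoutI.of_comp_eq_base (φ := φ) false).symm)
  constructor
  · refine Function.Injective.of_comp (f := k) ?_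
    rw [← MonoidHom.coe_comp, hkA]
    exact Monoid.PushoutI.of_injective hφ true
  · refine Function.Injective.of_comp (f := k) ?_
    rw [← MonoidHom.coe_comp, hkB]
    exact Monoid.PushoutI.of_injective hφ false

end Amalgam

section MayerVietoris

variable {C A B G V : Type} [Group C] [Group A] [Group B] [Group G] [AddCommGroup V] [Module ℚ V]
  {f : C →* A} {g : C →* B} {iA : A →* G} {iB : B →* G}

/-- A vector fixed by `C` defines a derivation on the amalgamated product that vanishes on `B` and
is inner on `A`. -/
theorem IsAmalgamatedProduct.exists_derivation (h : IsAmalgamatedProduct f g iA iB)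
    (ρ : Representation ℚ G V) (v : V) (hv : ∀ c, ρ (iA (f c)) v = v) :
    ∃ D : G → V, (∀ x a, D (x * iA a) = D x + (ρ (x * iA a) v - ρ x v)) ∧
      ∀ x b, D (x * iB b) = D x := by
  let p : G →* Equiv.Perm V :=
    { toFun := fun x => ⟨ρ x, ρ x⁻¹, ρ.inv_self_apply x, ρ.self_inv_apply x⟩
      map_one' := by ext; simp
      map_mul' := fun x y => by ext; simp }
  have hp : ∀ x m, p x m = ρ x m := fun _ _ => rfl
  let q : A →* Equiv.Perm V := (MulAut.conj (Equiv.addRight v)⁻¹).toMonoidHom.comp (p.comp iA)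
  have hq : ∀ a m, q a m = ρ (iA a) m + (ρ (iA a) v - v) := fun a m => by
    simp [q, hp, MulAut.conj_apply, Equiv.Perm.mul_apply, ← sub_eq_add_neg]
    abel
  obtain ⟨k, ⟨hkA, hkB⟩, -⟩ := h.2 (Equiv.Perm V) inferInstance q (p.comp iB) <| by
    ext c m
    have hc : iA (f c) = iB (g c) := DFunLike.congr_fun h.1 c
    simp only [MonoidHom.comp_apply, hq, hv, sub_self, add_zero, hp]
    rw [hc]
  have hkA' : ∀ a m, k (iA a) m = ρ (iA a) m + (ρ (iA a) v - v) := fun a m => by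
    rw [← hq, ← hkA]; rfl
  have hkB' : ∀ b m, k (iB b) m = ρ (iB b) m := fun b m => by
    rw [← hp, ← MonoidHom.comp_apply p, ← hkB]; rfl
  have hk : ∀ x m, k x m = ρ x m + k x 0 := by
    refine h.induction_right (by simp) (fun x a hx m => ?_) fun x b hx m => ?_
    · rw [map_mul, Equiv.Perm.mul_apply, Equiv.Perm.mul_apply, hx, hx (k (iA a) 0), hkA', hkA']
      simp [add_assoc]
    · rw [map_mul, Equiv.Perm.mul_apply, Equiv.Perm.mul_apply, hx, hx (k (iB b) 0), hkB', hkB']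
      simp
  refine ⟨fun x => k x 0, fun x a => ?_, fun x b => ?_⟩
  · simp only [map_mul, Equiv.Perm.mul_apply, hkA', map_zero, zero_add]
    rw [hk, map_sub, add_comm]
    rfl
  · simp only [map_mul, Equiv.Perm.mul_apply, hkB', map_zero]

theorem range_comp_le_left (f : C →* A) (iA : A →* G) : (iA.comp f).range ≤ iA.range := by
  rintro _ ⟨c, rfl⟩
  exact ⟨f c, rfl⟩

theorem IsAmalgamatedProduct.range_comp_le_right (h : IsAmalgamatedProduct f g iA iB) :
    (iA.comp f).range ≤ iB.range := by
  rw [h.1]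
  exact range_comp_le_left g iB

theorem IsAmalgamatedProduct.cosetProj_prod_single (h : IsAmalgamatedProduct f g iA iB) (x : G)
    (k : ℚ) : (cosetProj (range_comp_le_left f iA)).prod (-cosetProj h.range_comp_le_right)
      (MonoidAlgebra.single (x : G ⧸ (iA.comp f).range) k) =
        (MonoidAlgebra.single (x : G ⧸ iA.range) k, -MonoidAlgebra.single (x : G ⧸ iB.range) k) :=
  Prod.ext (cosetProj_single ..) (congrArg Neg.neg (cosetProj_single ..))

theorem IsAmalgamatedProduct.injective_cosetProj (h : IsAmalgamatedProduct f g iA iB) :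
    Function.Injective ((cosetProj (range_comp_le_left f iA)).prod
      (-cosetProj h.range_comp_le_right)) := by
  let ρ := Representation.ofMulAction ℚ G (G ⧸ (iA.comp f).range)
  let e : G → MonoidAlgebra ℚ (G ⧸ (iA.comp f).range) := fun x => MonoidAlgebra.single x 1
  have he : ∀ x, ρ x (e 1) = e x := fun x =>
    (Representation.ofMulAction_single ..).trans (congrArg e (mul_one x))
  obtain ⟨D, hDA, hDB⟩ := h.exists_derivation ρ (e 1) fun c => (he _).trans
    (congrArg (MonoidAlgebra.single · 1) (QuotientGroup.eq.2 (by simp)))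
  simp only [he] at hDA
  let sA := basisLift (Quotient.lift (s := QuotientGroup.leftRel iA.range) (fun x => e x - D x) <| by
    intro x y hxy
    obtain ⟨a, ha⟩ := QuotientGroup.leftRel_apply.1 hxy
    rw [← mul_inv_cancel_left x y, ← ha]
    simp only [hDA]
    abel)
  let sB := basisLift (Quotient.lift (s := QuotientGroup.leftRel iB.range) D <| by
    intro x y hxy
    obtain ⟨b, hb⟩ := QuotientGroup.leftRel_apply.1 hxy
    rw [← mul_inv_cancel_left x y, ← hb, hDB])
  let s : (Representation.ofMulAction ℚ G (G ⧸ iA.range)).asModule ×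
      (Representation.ofMulAction ℚ G (G ⧸ iB.range)).asModule →+ ρ.asModule :=
    sA.toAddMonoidHom.coprod (-sB.toAddMonoidHom)
  refine Function.LeftInverse.injective (g := s) fun m => ?_
  induction m using coset_induction with
  | zero => rw [map_zero, map_zero]
  | add x y hx hy => rw [map_add, map_add, hx, hy]
  | single x k =>
    have h1 : sA (MonoidAlgebra.single (x : G ⧸ iA.range) k) = k • (e x - D x) :=
      basisLift_single ..
    have h2 : sB (MonoidAlgebra.single (x : G ⧸ iB.range) k) = k • D x := basisLift_single ..
    have h3 : k • e x = MonoidAlgebra.single (x : G ⧸ (iA.comp f).range) k :=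
      (MonoidAlgebra.smul_single ..).trans (congrArg _ (mul_one k))
    refine (congrArg s (h.cosetProj_prod_single x k)).trans ?_
    change sA _ + -sB (-(MonoidAlgebra.single (x : G ⧸ iB.range) k)) = _
    rw [map_neg, neg_neg]
    refine (congrArg₂ (· + ·) h1 h2).trans ?_
    rw [← smul_add, sub_add_cancel, h3]

theorem IsAmalgamatedProduct.exact_cosetProj (h : IsAmalgamatedProduct f g iA iB) :
    Function.Exact ((cosetProj (range_comp_le_left f iA)).prod
      (-cosetProj h.range_comp_le_right)) ((cosetAug iA.range).coprod (cosetAug iB.range)) := by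
  let MA := (Representation.ofMulAction ℚ G (G ⧸ iA.range)).asModule
  let MB := (Representation.ofMulAction ℚ G (G ⧸ iB.range)).asModule
  let d := (cosetProj (range_comp_le_left f iA)).prod (-cosetProj h.range_comp_le_right)
  let eA : ℚ → G → MA := fun k x => MonoidAlgebra.single (x : G ⧸ iA.range) k
  let eB : ℚ → G → MB := fun k x => MonoidAlgebra.single (x : G ⧸ iB.range) k
  have hA : ∀ k x a, eA k (x * iA a) = eA k x := fun k x a =>
    congrArg (MonoidAlgebra.single · k) (QuotientGroup.mk_mul_of_mem x ⟨a, rfl⟩)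
  have hB : ∀ k x b, eB k (x * iB b) = eB k x := fun k x b =>
    congrArg (MonoidAlgebra.single · k) (QuotientGroup.mk_mul_of_mem x ⟨b, rfl⟩)
  have hd : ∀ k (x : G), d (MonoidAlgebra.single (x : G ⧸ (iA.comp f).range) k) =
      (eA k x, -eB k x) :=
    fun k x => h.cosetProj_prod_single x k
  have hmem : ∀ k x, (eA k x, -eB k x) ∈ LinearMap.range d := fun k x => ⟨_, hd k x⟩
  have hconst : ∀ k x, (eA k x - eA k 1, 0) ∈ LinearMap.range d := by
    intro k
    refine h.induction_right ?_ (fun x a hx => ?_) fun x b hx => ?_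
    · rw [sub_self]
      exact zero_mem _
    · rwa [hA]
    · have := add_mem (sub_mem (hmem k (x * iB b)) (hmem k x)) hx
      rw [hB] at this
      simpa using this
  let cA : (Representation.trivial ℚ G ℚ).asModule →+ MA :=
    MonoidAlgebra.singleAddHom (R := ℚ) ((1 : G) : G ⧸ iA.range)
  have hAA : ∀ u : MA, (u - cA (cosetAug iA.range u), 0) ∈ LinearMap.range d := by
    intro u
    induction u using coset_induction with
    | zero =>
      rw [map_zero, map_zero, sub_zero]
      exact zero_mem _
    | add x y hx hy =>
      convert add_mem hx hy using 1
      refine Prod.ext ?_ (add_zero 0).symm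
      rw [map_add, map_add]
      exact add_sub_add_comm ..
    | single x k =>
      rw [cosetAug_single]
      exact hconst k x
  have hBB : ∀ u : MB, (cA (cosetAug iB.range u), -u) ∈ LinearMap.range d := by
    intro u
    induction u using coset_induction with
    | zero =>
      rw [map_zero, map_zero, neg_zero]
      exact zero_mem _
    | add x y hx hy =>
      convert add_mem hx hy using 1
      refine Prod.ext ?_ (neg_add ..)
      rw [map_add, map_add]
      rfl
    | single x k =>
      rw [cosetAug_single]
      convert sub_mem (hmem k x) (hconst k x) using 1
      exact Prod.ext (sub_sub_cancel _ _).symm (sub_zero _).symm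
  rintro ⟨u, v⟩
  constructor
  · intro huv
    rw [LinearMap.coprod_apply] at huv
    have huv' : cA (cosetAug iA.range u) + cA (cosetAug iB.range v) = 0 := by
      rw [← map_add]
      exact (congrArg cA huv).trans (map_zero cA)
    have hsub : (u, v) = (u - cA (cosetAug iA.range u), 0) - (cA (cosetAug iB.range v), -v) :=
      Prod.ext ((sub_zero u).symm.trans ((congrArg (u - ·) huv'.symm).trans (sub_sub ..).symm))
        ((neg_neg v).symm.trans (zero_sub _).symm)
    rw [hsub]
    exact sub_mem (hAA u) (hBB v)
  · rintro ⟨m, hm⟩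
    rw [← hm]
    clear hm
    induction m using coset_induction with
    | zero => rw [map_zero, map_zero]
    | add x y hx hy => rw [map_add, map_add, hx, hy, add_zero]
    | single x k =>
      refine (congrArg _ (h.cosetProj_prod_single x k)).trans ?_
      refine (congrArg₂ (· + ·) (cosetAug_single ..)
        ((map_neg (cosetAug iB.range) _).trans (congrArg Neg.neg (cosetAug_single ..)))).trans ?_
      exact add_neg_cancel k

theorem IsAmalgamatedProduct.hasRatChi (h : IsAmalgamatedProduct f g iA iB)
    (hf : Function.Injective f) (hg : Function.Injective g) {a b c : ℚ}
    (ha : HasRatChi A a) (hb : HasRatChi B b) (hc : HasRatChi C c) :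
    HasRatChi G (a + b - c) := by
  obtain ⟨hiA, hiB⟩ := h.injective hf hg
  obtain ⟨nA, ha⟩ := ha.hasChi_cosets hiA
  obtain ⟨nB, hb⟩ := hb.hasChi_cosets hiB
  obtain ⟨nC, hc⟩ := hc.hasChi_cosets (j := iA.comp f) (hiA.comp hf)
  have hτ := kaplanskyTrace_mul_comm (RingHom.id ℚ) (G := G)
  let MA := (Representation.ofMulAction ℚ G (G ⧸ iA.range)).asModule
  let MB := (Representation.ofMulAction ℚ G (G ⧸ iB.range)).asModule
  have hab := (ha.mono hτ (le_max_left nA nB)).of_extension (hb.mono hτ (le_max_right nA nB))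
    (LinearMap.inl (MonoidAlgebra ℚ G) MA MB) (LinearMap.snd (MonoidAlgebra ℚ G) MA MB)
    LinearMap.inl_injective LinearMap.snd_surjective Function.Exact.inl_snd
  refine ⟨_, (hc.mono hτ (le_max_left nC (max nA nB))).of_exact_right hτ
    (hab.mono hτ (le_max_right nC (max nA nB))) _ _ h.injective_cosetProj ?_ h.exact_cosetProj⟩
  intro q
  refine ⟨(MonoidAlgebra.single ((1 : G) : G ⧸ iA.range) q, 0), ?_⟩
  rw [LinearMap.coprod_apply, map_zero, add_zero]
  exact cosetAug_single ..

end MayerVietoris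

/-- Let `H` be a group of type `VFP` with `χ(H) = x ≠ 0`, and let `G = A *_C B` be a
reduced amalgam (`[A:C] ≥ 2`, `[B:C] ≥ 2`) in which `A`, `B`, `C` each contain `H`
(embedded via `h : H → C`) as a subgroup of finite index, and `G` is of type `VFP` with
`χ(G) = q`.  Then `χ(G)/χ(H) ≤ 0`, `χ(G) = 0` iff `[A:C] = [B:C] = 2`, and in fact
`χ(G) = (χ(H)/[C:H])·(1/[A:C] + 1/[B:C] − 1)`. -/
theorem eulerChar_reduced_amalgam (H C A B G : Type)
    [Group H] [Group C] [Group A] [Group B] [Group G]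
    (h : H →* C) (f : C →* A) (g : C →* B) (iA : A →* G) (iB : B →* G)
    (hh : Function.Injective h) (hf : Function.Injective f) (hg : Function.Injective g)
    (hpush : IsAmalgamatedProduct f g iA iB)
    (hCH : h.range.index ≠ 0)
    (hAH : ((f.comp h).range.index ≠ 0)) (hBH : ((g.comp h).range.index ≠ 0))
    (hred₁ : 2 ≤ f.range.index) (hred₂ : 2 ≤ g.range.index)
    (hHvfp : TypeVFP H) (hGvfp : TypeVFP G)
    (x q : ℚ) (hx : EulerCharRel H x) (hx0 : x ≠ 0) (hq : EulerCharRel G q) :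
    q / x ≤ 0 ∧ (q = 0 ↔ f.range.index = 2 ∧ g.range.index = 2) ∧
      q = (x / (h.range.index : ℚ)) *
        (1 / (f.range.index : ℚ) + 1 / (g.range.index : ℚ) - 1) := by
  have hA := hx.hasRatChi.of_restrict (j := f.comp h) (hf.comp hh) hAH
  have hB := hx.hasRatChi.of_restrict (j := g.comp h) (hg.comp hh) hBH
  have hC := hx.hasRatChi.of_restrict hh hCH
  have hq' := hq.hasRatChi.unique (hpush.hasRatChi hf hg hA hB hC)
  rw [MonoidHom.range_comp, MonoidHom.range_comp, Subgroup.index_map_of_injective _ hf,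
    Subgroup.index_map_of_injective _ hg] at hq'
  generalize f.range.index = a at *
  generalize g.range.index = b at *
  generalize h.range.index = c at *
  have ha : (2 : ℚ) ≤ a := by exact_mod_cast hred₁
  have hb : (2 : ℚ) ≤ b := by exact_mod_cast hred₂
  have hc : (0 : ℚ) < c := by exact_mod_cast Nat.pos_of_ne_zero hCH
  have ha' : 1 / (a : ℚ) ≤ 1 / 2 := one_div_le_one_div_of_le two_pos ha
  have hb' : 1 / (b : ℚ) ≤ 1 / 2 := one_div_le_one_div_of_le two_pos hb
  have hq : q = x / c * (1 / a + 1 / b - 1) := by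
    rw [hq']
    push_cast
    field_simp
  refine ⟨?_, ⟨fun h0 => ?_, ?_⟩, hq⟩
  · rw [hq, show x / c * (1 / a + 1 / b - 1) / x = (1 / a + 1 / b - 1) / c by field_simp]
    exact div_nonpos_of_nonpos_of_nonneg (by linarith) hc.le
  · have h1 : (1 : ℚ) / a + 1 / b - 1 = 0 :=
      (mul_eq_zero.1 (hq.symm.trans h0)).resolve_left (div_ne_zero hx0 hc.ne')
    have h2 : (1 : ℚ) / a = 1 / 2 := by linarith
    have h3 : (1 : ℚ) / b = 1 / 2 := by linarith
    rw [one_div, one_div, inv_inj] at h2 h3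
    exact ⟨by exact_mod_cast h2, by exact_mod_cast h3⟩
  · rintro ⟨rfl, rfl⟩
    rw [hq]
    norm_num
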